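/- For every real number x ≥ 1865, one has Li(x) < x/log x + 3x/(2·(log x)²). -/

import Mathlib

/-- `Li(x) = ∫₂ˣ dt / log t`, the logarithmic integral. -/
noncomputable def Li (x : ℝ) : ℝ := ∫ t in (2 : ℝ)..x, 1 / Real.log t

/-!
If `1 ≤ u * (g u + g' u)` for `u = log t`, then `t * g (log t)` grows at least as fast as `Li`.
The right-hand side of the theorem has this form with `g u = 1 / u + 3 / (2 * u ^ 2)`, for which
`u * (g u + g' u) = 1 + (u - 6) / (2 * u ^ 2)`; so the theorem propagates from `t = 1800`
to every larger argument. The value `Li 1800` is bounded by the same comparison started at `t = 2`,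
now with a polynomial `g` for which `u * (g u + g' u) - 1` is a square times `3 * u / 2 - 1`.
-/

open Real Set Polynomial

theorem continuousOn_one_div_log : ContinuousOn (fun t : ℝ => 1 / log t) (Ioi 1) :=
  continuousOn_const.div (continuousOn_log.mono fun _ ht => (one_pos.trans ht).ne')
    fun _ ht => (log_pos ht).ne'

theorem intervalIntegrable_one_div_log {a b : ℝ} (ha : 1 < a) (hb : 1 < b) :
    IntervalIntegrable (fun t : ℝ => 1 / log t) MeasureTheory.volume a b :=
  (continuousOn_one_div_log.mono fun _ ht => (lt_min ha hb).trans_le ht.1).intervalIntegrable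

theorem Li_two : Li 2 = 0 :=
  intervalIntegral.integral_same

theorem Li_sub_Li {a b : ℝ} (ha : 1 < a) (hb : 1 < b) :
    Li b - Li a = ∫ t in a..b, 1 / log t :=
  intervalIntegral.integral_interval_sub_left
    (intervalIntegrable_one_div_log one_lt_two hb) (intervalIntegrable_one_div_log one_lt_two ha)

theorem hasDerivAt_mul_comp_log {g : ℝ → ℝ} {g' t : ℝ} (ht : t ≠ 0)
    (hg : HasDerivAt g g' (log t)) :
    HasDerivAt (fun s => s * g (log s)) (g (log t) + g') t := by
  refine ((hasDerivAt_id' t).fun_mul (hg.comp t (hasDerivAt_log ht))).congr_deriv ?_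
  rw [Function.comp_apply, one_mul, mul_left_comm, mul_inv_cancel₀ ht, mul_one]

theorem Li_sub_Li_le_of_one_le_mul_add_deriv {g g' : ℝ → ℝ} {a b : ℝ} (ha : 1 < a) (hab : a ≤ b)
    (hg : ∀ u ∈ Icc (log a) (log b), HasDerivAt g (g' u) u)
    (hgg' : ∀ u ∈ Icc (log a) (log b), 1 ≤ u * (g u + g' u)) :
    Li b - Li a ≤ b * g (log b) - a * g (log a) := by
  have one_lt {t : ℝ} (ht : t ∈ Icc a b) : 1 < t := ha.trans_le ht.1
  have log_mem {t : ℝ} (ht : t ∈ Icc a b) : log t ∈ Icc (log a) (log b) :=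
    ⟨log_le_log (one_pos.trans ha) ht.1, log_le_log (one_pos.trans (one_lt ht)) ht.2⟩
  have hderiv {t : ℝ} (ht : t ∈ Icc a b) :
      HasDerivAt (fun s => s * g (log s)) (g (log t) + g' (log t)) t :=
    hasDerivAt_mul_comp_log (one_pos.trans (one_lt ht)).ne' (hg _ (log_mem ht))
  rw [Li_sub_Li ha (ha.trans_le hab)]
  refine intervalIntegral.integral_le_sub_of_hasDeriv_right_of_le
    (g := fun s => s * g (log s)) (g' := fun s => g (log s) + g' (log s)) hab
    (fun t ht => (hderiv ht).continuousAt.continuousWithinAt)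
    (fun t ht => (hderiv (Ioo_subset_Icc_self ht)).hasDerivWithinAt)
    (continuousOn_one_div_log.mono fun t ht => one_lt ht).integrableOn_Icc fun t ht => ?_
  have ht := Ioo_subset_Icc_self ht
  exact (div_le_iff₀' (log_pos (one_lt ht))).2 (hgg' _ (log_mem ht))

theorem hasDerivAt_one_div_add_three_div {u : ℝ} (hu : u ≠ 0) :
    HasDerivAt (fun v : ℝ => 1 / v + 3 / (2 * v ^ 2)) (-1 / u ^ 2 - 3 / u ^ 3) u := by
  refine (((hasDerivAt_const u 1).fun_div (hasDerivAt_id' u) hu).fun_add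
    ((hasDerivAt_const u 3).fun_div ((hasDerivAt_pow 2 u).const_mul 2) (by positivity))).congr_deriv
    ?_
  field

theorem Li_sub_Li_le_of_six_le_log {a x : ℝ} (ha : 1 < a) (hlog : 6 ≤ log a) (hax : a ≤ x) :
    Li x - Li a ≤ (x / log x + 3 * x / (2 * log x ^ 2)) -
      (a / log a + 3 * a / (2 * log a ^ 2)) := by
  have factor (y : ℝ) :
      y / log y + 3 * y / (2 * log y ^ 2) = y * (1 / log y + 3 / (2 * log y ^ 2)) := by ring
  rw [factor, factor]
  refine Li_sub_Li_le_of_one_le_mul_add_deriv (g := fun u => 1 / u + 3 / (2 * u ^ 2)) ha hax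
    (fun u hu => hasDerivAt_one_div_add_three_div (by linarith [hu.1])) fun u hu => ?_
  have hu : 6 ≤ u := hlog.trans hu.1
  calc (1 : ℝ) ≤ 1 + (u - 6) / (2 * u ^ 2) :=
        le_add_of_nonneg_right (div_nonneg (sub_nonneg.2 hu) (by positivity))
    _ = u * (1 / u + 3 / (2 * u ^ 2) + (-1 / u ^ 2 - 3 / u ^ 3)) := by field

/-- The polynomial `P` solving `u * (P + P') = 1 + (3 * u / 2 - 1) * Q ^ 2`, where the roots
`7 / 2`, `6`, `7` of `Q` are chosen so that `t * P (log t)` stays close to `Li t` up to `t = 1800`.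
The factor `3 * u / 2 - 1` is positive for `u ≥ log 2`, and `Q 0 = 1` makes the right-hand side
divisible by `u`. -/
noncomputable def liMajorant : ℝ[X] :=
  C (1 / 172872) * (1667744 - 1202636 * X + 396939 * X ^ 2 - 73800 * X ^ 3 + 8011 * X ^ 4
    - 476 * X ^ 5 + 12 * X ^ 6)

theorem eval_liMajorant (u : ℝ) :
    liMajorant.eval u = (1667744 - 1202636 * u + 396939 * u ^ 2 - 73800 * u ^ 3 + 8011 * u ^ 4
      - 476 * u ^ 5 + 12 * u ^ 6) / 172872 := by
  simp only [liMajorant, eval_mul, eval_C, eval_add, eval_sub, eval_ofNat, eval_X, eval_pow]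
  ring

theorem mul_eval_add_eval_derivative_liMajorant (u : ℝ) :
    u * (liMajorant.eval u + liMajorant.derivative.eval u) =
      1 + (3 * u / 2 - 1) * ((1 - 2 * u / 7) * (1 - u / 6) * (1 - u / 7)) ^ 2 := by
  simp only [liMajorant, derivative_C, derivative_mul, derivative_add, derivative_sub,
    derivative_ofNat, derivative_X, derivative_X_pow, eval_mul, eval_C, eval_add, eval_sub,
    eval_zero, eval_one, eval_ofNat, eval_X, eval_pow]
  push_cast
  ring

theorem Li_sub_Li_le_eval_liMajorant {a b : ℝ} (ha : 1 < a) (hlog : 2 / 3 ≤ log a) (hab : a ≤ b) :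
    Li b - Li a ≤ b * liMajorant.eval (log b) - a * liMajorant.eval (log a) := by
  refine Li_sub_Li_le_of_one_le_mul_add_deriv ha hab (fun u _ => liMajorant.hasDerivAt u)
    fun u hu => ?_
  rw [mul_eval_add_eval_derivative_liMajorant]
  exact le_add_of_nonneg_right (mul_nonneg (by linarith [hlog.trans hu.1]) (sq_nonneg _))

theorem eval_liMajorant_le {l u r : ℝ} (hl : 0 ≤ l) (hlu : l ≤ u) (hur : u ≤ r) :
    liMajorant.eval u ≤ (1667744 - 1202636 * l + 396939 * r ^ 2 - 73800 * l ^ 3 + 8011 * r ^ 4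
      - 476 * l ^ 5 + 12 * r ^ 6) / 172872 := by
  have hu : 0 ≤ u := hl.trans hlu
  rw [eval_liMajorant]
  gcongr

theorem le_eval_liMajorant {l u r : ℝ} (hl : 0 ≤ l) (hlu : l ≤ u) (hur : u ≤ r) :
    (1667744 - 1202636 * r + 396939 * l ^ 2 - 73800 * r ^ 3 + 8011 * l ^ 4
      - 476 * r ^ 5 + 12 * l ^ 6) / 172872 ≤ liMajorant.eval u := by
  have hu : 0 ≤ u := hl.trans hlu
  rw [eval_liMajorant]
  gcongr

theorem log_1800_eq : log 1800 = 3 * log 2 + 2 * log 3 + 2 * log 5 := by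
  rw [show (1800 : ℝ) = 2 ^ 3 * 3 ^ 2 * 5 ^ 2 by norm_num, log_mul (by norm_num) (by norm_num),
    log_mul (by norm_num) (by norm_num), log_pow, log_pow, log_pow]
  norm_num

theorem lt_log_1800 : 7.49554194 < log 1800 := by
  linarith [log_1800_eq, log_two_gt_d9, log_three_gt_d9, log_five_gt_d9]

theorem log_1800_lt : log 1800 < 7.49554195 := by
  linarith [log_1800_eq, log_two_lt_d9, log_three_lt_d9, log_five_lt_d9]

theorem lt_eval_liMajorant_log_two : 5.796 < liMajorant.eval (log 2) :=
  lt_of_lt_of_le (by norm_num) <| le_eval_liMajorant (l := 0.69314) (r := 0.69315) (by norm_num)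
    (by linarith [log_two_gt_d9]) (by linarith [log_two_lt_d9])

theorem eval_liMajorant_log_1800_lt : liMajorant.eval (log 1800) < 0.16654 :=
  (eval_liMajorant_le (by norm_num) lt_log_1800.le log_1800_lt.le).trans_lt (by norm_num)

theorem Li_1800_lt : Li 1800 < 1800 / log 1800 + 3 * 1800 / (2 * log 1800 ^ 2) := by
  have hLi : Li 1800 ≤ 1800 * liMajorant.eval (log 1800) - 2 * liMajorant.eval (log 2) := by
    simpa only [Li_two, sub_zero] using Li_sub_Li_le_eval_liMajorant (a := 2) (b := 1800)
      one_lt_two (by linarith [log_two_gt_d9]) (by norm_num)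
  calc Li 1800 < 1800 * 0.16654 - 2 * 5.796 := by
        linarith [lt_eval_liMajorant_log_two, eval_liMajorant_log_1800_lt]
    _ < 1800 / 7.49554195 + 3 * 1800 / (2 * 7.49554195 ^ 2) := by norm_num
    _ ≤ 1800 / log 1800 + 3 * 1800 / (2 * log 1800 ^ 2) := by
        have := log_1800_lt.le
        gcongr

theorem Li_upper_bound_general {x : ℝ} (hx : 1800 ≤ x) :
    Li x < x / log x + 3 * x / (2 * log x ^ 2) := by
  have hgrowth := Li_sub_Li_le_of_six_le_log (by norm_num) (by linarith [lt_log_1800]) hx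
  linarith [Li_1800_lt]

theorem Li_upper_bound (x : ℝ) (hx : 1865 ≤ x) :
    Li x < x / Real.log x + 3 * x / (2 * Real.log x ^ 2) :=
  Li_upper_bound_general (by linarith)
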